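/- Let 0 = x_0 < x_1 < ... < x_N = 1 be a partition of [0,1] with h_i = x_{i+1} - x_i. For each interior index i (1 ≤ i ≤ N-1) define φ_i(x) = σ((x - x_{i-1})/h_{i-1}) - σ((x - x_i)(1/h_{i-1} + 1/h_i)) + σ((x - x_{i+1})/h_i), where σ is the ReLU function. Then φ_i(x_j) = δ_{ij} (Kronecker delta) for all i with 1 ≤ i ≤ N-1 and all j with 0 ≤ j ≤ N. -/

import Mathlib

/-! To the left of `x i` only the first ReLU can be active, and at the nodes `≤ x (i-1)` it is not.
At `x i` it equals `1`. At the nodes `≥ x (i+1)` all three ReLUs are active, and the slopes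
`1/h_{i-1}`, `-(1/h_{i-1} + 1/h_i)`, `1/h_i` as well as the constant terms cancel. -/

/-- The ReLU activation function. -/
noncomputable def relu (t : ℝ) : ℝ := max t 0

lemma node_le (N : ℕ) (x : ℕ → ℝ) (hmono : ∀ j, j < N → x j < x (j + 1))
    (a b : ℕ) (hab : a ≤ b) (hb : b ≤ N) : x a ≤ x b := by
  induction b, hab using Nat.le_induction with
  | base => exact le_rfl
  | succ k _ ih => exact (ih (by omega)).trans (hmono k (by omega)).le

lemma relu_of_nonneg {t : ℝ} (ht : 0 ≤ t) : relu t = t := max_eq_left ht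

lemma relu_of_nonpos {t : ℝ} (ht : t ≤ 0) : relu t = 0 := max_eq_right ht

/-- the hat functions written with ReLU satisfy φ_i(x_j) = δ_{ij}. -/
theorem stmt_1 (N : ℕ) (x : ℕ → ℝ)
    (hx0 : x 0 = 0) (hxN : x N = 1)
    (hmono : ∀ j, j < N → x j < x (j + 1))
    (φ : ℕ → ℝ → ℝ)
    (hφ : ∀ i, 1 ≤ i → i < N → ∀ y, φ i y =
      relu ((y - x (i - 1)) / (x i - x (i - 1)))
      - relu ((y - x i) * (1 / (x i - x (i - 1)) + 1 / (x (i + 1) - x i)))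
      + relu ((y - x (i + 1)) / (x (i + 1) - x i))) :
    ∀ i, 1 ≤ i → i < N → ∀ j, j ≤ N →
      φ i (x j) = if i = j then (1 : ℝ) else 0 := by
  intro i hi hiN j hj
  rw [hφ i hi hiN]
  have h1 : x (i - 1) < x i := by
    have h := hmono (i - 1) (by omega)
    rwa [Nat.sub_add_cancel hi] at h
  have h2 := hmono i hiN
  have p1 : 0 < x i - x (i - 1) := sub_pos.2 h1
  have p2 : 0 < x (i + 1) - x i := sub_pos.2 h2
  have p3 : 0 < 1 / (x i - x (i - 1)) + 1 / (x (i + 1) - x i) := by positivity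
  rcases lt_trichotomy i j with hij | rfl | hij
  · have h3 := node_le N x hmono (i + 1) j hij hj
    rw [if_neg (by omega), relu_of_nonneg (div_nonneg (by linarith) p1.le),
      relu_of_nonneg (mul_nonneg (by linarith) p3.le),
      relu_of_nonneg (div_nonneg (by linarith) p2.le)]
    field_simp
    ring
  · rw [if_pos rfl, div_self p1.ne', relu_of_nonneg zero_le_one, sub_self, zero_mul,
      relu_of_nonpos le_rfl,
      relu_of_nonpos (div_nonpos_of_nonpos_of_nonneg (by linarith) p2.le)]
    ring
  · have h3 := node_le N x hmono j (i - 1) (by omega) (by omega)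
    rw [if_neg (by omega), relu_of_nonpos (div_nonpos_of_nonpos_of_nonneg (by linarith) p1.le),
      relu_of_nonpos (mul_nonpos_of_nonpos_of_nonneg (by linarith) p3.le),
      relu_of_nonpos (div_nonpos_of_nonpos_of_nonneg (by linarith) p2.le)]
    ring
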